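/- Let F be a field of characteristic 2 and let r be a positive integer with consecutive-ones binary expansion r = Σ_{i=1}^k (−1)^{i−1} 2^{e_i}, where e_1 > ⋯ > e_k ≥ 0 and e_{k−1} > e_k + 1 if k ≥ 2, and let r_j = Σ_{i=j+1}^k (−1)^{i−j−1} 2^{e_i} for 0 ≤ j ≤ k. Then the Kronecker product J_r ⊗ J_r is similar over F to the block-diagonal matrix consisting, for each 1 ≤ i ≤ k, of exactly 2^{e_i} − 2·r_i blocks equal to J_{2^{e_i}} (all these block counts being nonnegative). In particular, every block size occurring in the Jordan form of J_r ⊗ J_r in characteristic 2 is a power of 2. -/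

import Mathlib

/-!
Let `N = J_r ⊗ J_r - 1`. Jordan types of nilpotent operators are determined by the dimensions of the
kernels of powers, so everything follows from computing `K(r, m) = dim ker N^m` for all `m`.

Realise `F^r ⊗ F^r` as the arrays on `ℕ × ℕ` supported on an `r × r` box, i.e. as
`ker X^r ⊓ ker Y^r` for the two commuting shifts `X`, `Y`; then `N = X + Y + X Y`, and in
characteristic 2, `N^q = X^q + Y^q + X^q Y^q` for `q` a power of two. Write
`K(a, b, m) = dim (ker X^a ⊓ ker Y^b ⊓ ker N^m)`.

* `K(a, q, m) = a m` for `a, m ≤ q` (`GridPair.finrank_eq`): `≤` by induction on `a`, and `≥`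
  because `N^m` maps into `ker N^(q-m)`.
* Hence on `D = ker X^q ⊓ ker Y^q ⊓ ker N^m` each of `X` and `Y` has `ker A^r = im A^(q-r)`, and
  rank-nullity gives the reflection formula `K(r, r, m) = (2 r - q) m + K(q - r, q - r, m)` for
  `m ≤ q` (`GridPair.reflect`). For `m > q ≥ r` nothing changes, since `N^q = 0`.
* The expansion of `r` satisfies `r_j = 2^(e_(j+1)) - r_(j+1)`, so iterating the reflection gives
  `K(r, r, m) = ∑ i, (2^(e_i) - 2 r_i) min (2^(e_i), m)` (`finrank_kerXYN_eq`), which is the kernel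
  dimension for the claimed Jordan form.

The structure theorem over `F[X]` provides some Jordan form of `N` (`exists_blockShift`), and the
second differences of the kernel dimensions recover the block multiplicities (`card_fiber_eq`). This
gives the similarity, and it shows that the block sizes of any Jordan form are powers of two.
-/

open Kronecker

/-- The `m × m` Jordan block with eigenvalue `1`: ones on the main diagonal and the
superdiagonal, zeros elsewhere. -/
def jordanBlock (F : Type*) [Zero F] [One F] (m : ℕ) : Matrix (Fin m) (Fin m) F :=
  Matrix.of fun i j => if (j : ℕ) = (i : ℕ) ∨ (j : ℕ) = (i : ℕ) + 1 then 1 else 0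

/-- The block-diagonal matrix whose diagonal blocks are the Jordan blocks `J_{d i}`, `i : ι`. -/
def jordanBlockDiag (F : Type*) [Field F] {ι : Type} [DecidableEq ι] (d : ι → ℕ) :
    Matrix ((i : ι) × Fin (d i)) ((i : ι) × Fin (d i)) F :=
  Matrix.blockDiagonal' fun i => jordanBlock F (d i)

/-- Similarity of square matrices, possibly indexed by different (finite) types:
both matrices represent the same linear endomorphism up to a linear change of basis. -/
def MatSimilar (F : Type*) [Field F] {n m : Type*} [Fintype n] [Fintype m]
    (A : Matrix n n F) (B : Matrix m m F) : Prop :=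
  ∃ e : (n → F) ≃ₗ[F] (m → F), ∀ v, e (A.mulVec v) = B.mulVec (e v)

/-- The partial sum `r_j = Σ_{i=j+1}^k (−1)^{i−j−1} 2^{e_i}` (0-indexed: sum over `i ≥ j`)
associated with the consecutive-ones binary expansion given by exponents `e`. -/
def coPartial (k : ℕ) (e : Fin k → ℕ) (j : ℕ) : ℤ :=
  ∑ i ∈ Finset.univ.filter (fun i : Fin k => j ≤ (i : ℕ)),
    (-1) ^ ((i : ℕ) - j) * 2 ^ (e i)

open Module

/-! ### Kernel dimensions for two commuting shifts -/

theorem finrank_map_add {F V W : Type*} [Field F] [AddCommGroup V] [Module F V]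
    [AddCommGroup W] [Module F W] (f : V →ₗ[F] W) (S : Submodule F V) [FiniteDimensional F S] :
    finrank F (S.map f) + finrank F (LinearMap.ker f ⊓ S : Submodule F V) = finrank F S := by
  have h := LinearMap.finrank_range_add_finrank_ker (f.domRestrict S)
  rw [LinearMap.range_domRestrict] at h
  rw [← h, LinearMap.ker_domRestrict, ← Submodule.finrank_map_subtype_eq,
    Submodule.map_comap_subtype, inf_comm]

/-- If `P` and `Q'` commute, `ker P' = im P` and `ker Q = im Q'`, then `P` maps `ker P ⊔ ker Q` onto
`Q' (ker P')`; rank-nullity on both sides compares `ker P ⊓ ker Q` with `ker P' ⊓ ker Q'`. -/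
theorem finrank_ker_inf_ker {F V : Type*} [Field F] [AddCommGroup V] [Module F V]
    [FiniteDimensional F V] (P P' Q Q' : End F V) (hcomm : Commute P Q')
    (h1 : LinearMap.ker P' = LinearMap.range P) (h2 : LinearMap.ker Q = LinearMap.range Q') :
    finrank F (LinearMap.ker P ⊓ LinearMap.ker Q : Submodule F V) + finrank F V =
      finrank F (LinearMap.ker P) + finrank F (LinearMap.ker Q) +
      finrank F (LinearMap.ker P' ⊓ LinearMap.ker Q' : Submodule F V) := by
  have hs := Submodule.finrank_sup_add_finrank_inf_eq (LinearMap.ker P) (LinearMap.ker Q)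
  have hP := finrank_map_add P (LinearMap.ker P ⊔ LinearMap.ker Q)
  have hQ := finrank_map_add Q' (LinearMap.ker P')
  have hr := LinearMap.finrank_range_add_finrank_ker P
  have hmap : (LinearMap.ker P ⊔ LinearMap.ker Q).map P = (LinearMap.ker P').map Q' := by
    have h0 : (LinearMap.ker P).map P = ⊥ := (Submodule.map_le_iff_le_comap.2 le_rfl).antisymm bot_le
    rw [Submodule.map_sup, h0, h1, h2, bot_sup_eq,
      ← LinearMap.range_comp, ← LinearMap.range_comp]
    exact congrArg _ hcomm
  rw [hmap, inf_eq_left.2 le_sup_left] at hP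
  rw [inf_comm] at hQ
  rw [← h1] at hr
  omega

theorem commute_add_pow_two_pow {F V : Type*} [Field F] [CharP F 2] [AddCommGroup V] [Module F V]
    {A B : End F V} (h : Commute A B) (n : ℕ) : (A + B) ^ 2 ^ n = A ^ 2 ^ n + B ^ 2 ^ n := by
  have h2 : (2 : End F V) = 0 := by
    have : ((2 : F) • (1 : End F V)) = 0 := by rw [CharTwo.two_eq_zero, zero_smul]
    rw [two_smul] at this
    rw [← this]; norm_num
  induction n with
  | zero => simp
  | succ n ih =>
    rw [pow_succ, pow_mul, ih, pow_mul, pow_mul, (h.pow_pow _ _).add_sq, h2]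
    simp

theorem commute_left_tensorNil {F V : Type*} [Field F] [AddCommGroup V] [Module F V]
    {X Y : End F V} (h : Commute X Y) : Commute X (X + Y + X * Y) :=
  ((Commute.refl X).add_right h).add_right ((Commute.refl X).mul_right h)

theorem commute_right_tensorNil {F V : Type*} [Field F] [AddCommGroup V] [Module F V]
    {X Y : End F V} (h : Commute X Y) : Commute Y (X + Y + X * Y) :=
  (h.symm.add_right (Commute.refl Y)).add_right (h.symm.mul_right (Commute.refl Y))

theorem tensorNil_pow_two_pow {F V : Type*} [Field F] [CharP F 2] [AddCommGroup V] [Module F V]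
    {X Y : End F V} (h : Commute X Y) (n : ℕ) :
    (X + Y + X * Y) ^ 2 ^ n = X ^ 2 ^ n + Y ^ 2 ^ n + X ^ 2 ^ n * Y ^ 2 ^ n := by
  rw [commute_add_pow_two_pow, commute_add_pow_two_pow h, h.mul_pow]
  exact ((Commute.refl X).mul_right h).add_left (h.symm.mul_right (Commute.refl Y))

/-- The subspace `ker X^a ⊓ ker Y^b ⊓ ker N^m`, where `N = X + Y + X Y = (1 + X)(1 + Y) - 1`. -/
def kerXYN {F V : Type*} [Field F] [AddCommGroup V] [Module F V] (X Y : End F V) (a b m : ℕ) :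
    Submodule F V :=
  LinearMap.ker (X ^ a) ⊓ LinearMap.ker (Y ^ b) ⊓ LinearMap.ker ((X + Y + X * Y) ^ m)

/-- A commuting pair behaving like the two partial shifts of a doubly infinite array: the subspace
`ker X^a ⊓ ker Y^b` is finite-dimensional of dimension `a * b` for all `a` and `b`, so that `1 + X`
and `1 + Y` act on it as `J_a ⊗ 1` and `1 ⊗ J_b`. -/
structure GridPair {F V : Type*} [Field F] [AddCommGroup V] [Module F V] (X Y : End F V) : Prop where
  comm : Commute X Y
  fin : ∀ a b, FiniteDimensional F (LinearMap.ker (X ^ a) ⊓ LinearMap.ker (Y ^ b) : Submodule F V)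
  dim : ∀ a b, finrank F (LinearMap.ker (X ^ a) ⊓ LinearMap.ker (Y ^ b) : Submodule F V) = a * b

section
variable {F V : Type*} [Field F] [AddCommGroup V] [Module F V] {X Y : End F V}

theorem kerXYN_swap (h : Commute X Y) (a b m : ℕ) : kerXYN Y X a b m = kerXYN X Y b a m := by
  unfold kerXYN
  rw [inf_comm (LinearMap.ker (Y ^ a)), h.eq, add_comm Y X]

theorem GridPair.symm (h : GridPair X Y) : GridPair Y X where
  comm := h.comm.symm
  fin a b := by rw [inf_comm]; exact h.fin b a
  dim a b := by rw [inf_comm, h.dim, mul_comm]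

theorem GridPair.finite_ker (h : GridPair X Y) (a b m : ℕ) :
    FiniteDimensional F (kerXYN X Y a b m) := by
  have := h.fin a b
  exact Submodule.finiteDimensional_of_le (inf_le_left : kerXYN X Y a b m ≤ _)

theorem mem_ker_of_commute {A B : End F V} (h : Commute A B) {v : V} (hv : A v = 0) :
    A (B v) = 0 := by
  have := congrArg (fun T : End F V => T v) h.eq
  simp only [Module.End.mul_apply] at this
  rw [this, hv, map_zero]

theorem ker_pow_mono (A : End F V) {a b : ℕ} (hab : a ≤ b) {v : V} (hv : (A ^ a) v = 0) :
    (A ^ b) v = 0 := by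
  rw [← Nat.sub_add_cancel hab, pow_add, Module.End.mul_apply, hv, map_zero]

theorem pow_apply_eq {A B : End F V} (h : Commute A B) {v : V} (hv : A v = B v) (m : ℕ) :
    (A ^ m) v = (B ^ m) v := by
  induction m with
  | zero => simp
  | succ m ih =>
    rw [pow_succ, Module.End.mul_apply, hv, pow_succ', Module.End.mul_apply, ← ih,
      ← Module.End.mul_apply, ← Module.End.mul_apply, (h.pow_left m).eq]

/-- Upper bound by induction on `a`: `X` maps `ker X^(a+1)` to `ker X^a`, and on `ker X` the operator
`N` coincides with `Y`, contributing at most `m` dimensions. -/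
theorem GridPair.finrank_le (h : GridPair X Y) (q a m : ℕ) :
    finrank F (kerXYN X Y a q m) ≤ a * m := by
  induction a with
  | zero =>
    have := h.finite_ker 0 q m
    have : kerXYN X Y 0 q m = ⊥ := by
      rw [eq_bot_iff]; intro v hv; simpa using hv.1.1
    rw [this]; simp
  | succ a ih =>
    have hf := h.finite_ker (a+1) q m
    have hf' := h.finite_ker a q m
    have hf1 := h.fin 1 m
    have hs := finrank_map_add X (kerXYN X Y (a+1) q m)
    have h1 : finrank F ((kerXYN X Y (a+1) q m).map X) ≤ finrank F (kerXYN X Y a q m) := by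
      apply Submodule.finrank_mono
      rintro _ ⟨v, ⟨⟨h1, h2⟩, h3⟩, rfl⟩
      refine ⟨⟨?_, ?_⟩, ?_⟩
      · simpa [pow_succ] using h1
      · exact mem_ker_of_commute (h.comm.symm.pow_left q) h2
      · exact mem_ker_of_commute ((commute_left_tensorNil h.comm).symm.pow_left m) h3
    have h2 : finrank F (LinearMap.ker X ⊓ kerXYN X Y (a+1) q m : Submodule F V) ≤ m := by
      refine le_of_le_of_eq ?_ ((h.dim 1 m).trans (one_mul m))
      apply Submodule.finrank_mono
      rintro v ⟨h1, _, h3⟩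
      refine ⟨by simpa using h1, ?_⟩
      have h1 : X v = 0 := h1
      have h3 : ((X + Y + X * Y) ^ m) v = 0 := h3
      change (Y ^ m) v = 0
      rw [← h3]
      refine pow_apply_eq (commute_right_tensorNil h.comm) ?_ m
      rw [h.comm.eq]
      simp [h1]
    rw [add_mul, one_mul]
    omega

theorem tensorNil_pow_eq_zero [CharP F 2] (h : Commute X Y) {n : ℕ} {v : V} (h1 : (X ^ 2 ^ n) v = 0)
    (h2 : (Y ^ 2 ^ n) v = 0) : ((X + Y + X * Y) ^ 2 ^ n) v = 0 := by
  rw [tensorNil_pow_two_pow h]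
  simp [h1, h2]

/-- `J_a ⊗ J_q` is a sum of `a` blocks `J_q` when `a ≤ q = 2^n`, expressed through kernels of powers.
The lower bound holds because `N^q = 0`: the image of `N^m` lies in `ker N^(q-m)`, whose dimension
is at most `a (q - m)`. -/
theorem GridPair.finrank_eq [CharP F 2] (h : GridPair X Y) (n a m : ℕ) (ha : a ≤ 2 ^ n)
    (hm : m ≤ 2 ^ n) : finrank F (kerXYN X Y a (2 ^ n) m) = a * m := by
  have hf := h.fin a (2 ^ n)
  have hf' := h.finite_ker a (2 ^ n) (2 ^ n - m)
  have hs := finrank_map_add ((X + Y + X * Y) ^ m) (LinearMap.ker (X ^ a) ⊓ LinearMap.ker (Y ^ 2 ^ n))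
  rw [h.dim, inf_comm (LinearMap.ker ((X + Y + X * Y) ^ m))] at hs
  change _ + finrank F (kerXYN X Y a (2 ^ n) m) = _ at hs
  have hu := h.finrank_le (2 ^ n) a m
  have hu' := h.finrank_le (2 ^ n) a (2 ^ n - m)
  have h1 : finrank F ((LinearMap.ker (X ^ a) ⊓ LinearMap.ker (Y ^ 2 ^ n)).map
      ((X + Y + X * Y) ^ m)) ≤ finrank F (kerXYN X Y a (2 ^ n) (2 ^ n - m)) := by
    apply Submodule.finrank_mono
    rintro _ ⟨v, ⟨h1, h2⟩, rfl⟩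
    refine ⟨⟨?_, ?_⟩, ?_⟩
    · exact mem_ker_of_commute ((commute_left_tensorNil h.comm).pow_pow _ _) h1
    · exact mem_ker_of_commute ((commute_right_tensorNil h.comm).pow_pow _ _) h2
    · change ((X + Y + X * Y) ^ (2 ^ n - m)) (((X + Y + X * Y) ^ m) v) = 0
      rw [← Module.End.mul_apply, ← pow_add, Nat.sub_add_cancel hm]
      exact tensorNil_pow_eq_zero h.comm (ker_pow_mono X ha h1) h2
  have : a * (2 ^ n - m) + a * m = a * 2 ^ n := by rw [← mul_add, Nat.sub_add_cancel hm]
  omega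

theorem ker_eq_range {W : Type*} [AddCommGroup W] [Module F W] [FiniteDimensional F W]
    (A : End F W) (m q r s : ℕ) (hq : r + s = q) (hdim : ∀ a ≤ q, finrank F (LinearMap.ker (A ^ a)) = a * m)
    (hW : finrank F W = q * m) : LinearMap.ker (A ^ r) = LinearMap.range (A ^ s) := by
  symm
  have hfull : LinearMap.ker (A ^ q) = ⊤ :=
    Submodule.eq_top_of_finrank_eq (by rw [hdim q le_rfl, hW])
  apply Submodule.eq_of_le_of_finrank_eq
  · rintro _ ⟨v, rfl⟩
    rw [LinearMap.mem_ker, ← Module.End.mul_apply, ← pow_add, hq, ← LinearMap.mem_ker, hfull]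
    trivial
  · have := LinearMap.finrank_range_add_finrank_ker (A ^ s)
    rw [hdim s (by omega), hW, ← hq, add_mul] at this
    rw [hdim r (by omega)]
    omega

/-- Reflection `r ↦ 2^n - r`: on kernels of powers up to `2^n`, passing from `J_s ⊗ J_s` to
`J_r ⊗ J_r` with `r + s = q = 2^n` adds `q - 2 s = 2 r - q` blocks `J_q`. Inside
`D = ker X^q ⊓ ker Y^q ⊓ ker N^m` both `X` and `Y` satisfy `ker A^r = im A^s`, and
`finrank_ker_inf_ker` applies. -/
theorem GridPair.reflect [CharP F 2] (h : GridPair X Y) (n r s m : ℕ) (hrs : r + s = 2 ^ n)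
    (hm : m ≤ 2 ^ n) :
    finrank F (kerXYN X Y r r m) + 2 ^ n * m = 2 * (r * m) + finrank F (kerXYN X Y s s m) := by
  set D := kerXYN X Y (2 ^ n) (2 ^ n) m with hD
  have : FiniteDimensional F D := h.finite_ker _ _ _
  have hX : ∀ v ∈ D, X v ∈ D := by
    rintro v ⟨⟨h1, h2⟩, h3⟩
    exact ⟨⟨mem_ker_of_commute (Commute.pow_self X _) h1,
      mem_ker_of_commute (h.comm.symm.pow_left _) h2⟩,
      mem_ker_of_commute ((commute_left_tensorNil h.comm).symm.pow_left m) h3⟩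
  have hY : ∀ v ∈ D, Y v ∈ D := by
    rintro v ⟨⟨h1, h2⟩, h3⟩
    exact ⟨⟨mem_ker_of_commute (h.comm.pow_left _) h1,
      mem_ker_of_commute (Commute.pow_self Y _) h2⟩,
      mem_ker_of_commute ((commute_right_tensorNil h.comm).symm.pow_left m) h3⟩
  set XD : End F D := X.restrict hX with hXD
  set YD : End F D := Y.restrict hY with hYD
  have hXp : ∀ a (v : D), ((XD ^ a) v : V) = (X ^ a) v := by
    intro a v
    rw [hXD, Module.End.pow_restrict]; rfl
  have hYp : ∀ a (v : D), ((YD ^ a) v : V) = (Y ^ a) v := by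
    intro a v
    rw [hYD, Module.End.pow_restrict]; rfl
  have hc : Commute XD YD := by
    ext v
    exact congrArg (fun T : End F V => T v) h.comm.eq
  have hK : ∀ a ≤ 2 ^ n, ∀ b ≤ 2 ^ n,
      finrank F (LinearMap.ker (XD ^ a) ⊓ LinearMap.ker (YD ^ b) : Submodule F D) =
        finrank F (kerXYN X Y a b m) := by
    intro a ha b hb
    rw [← Submodule.finrank_map_subtype_eq]
    have : (LinearMap.ker (XD ^ a) ⊓ LinearMap.ker (YD ^ b)).map D.subtype = kerXYN X Y a b m := by
      ext v
      constructor
      · rintro ⟨w, ⟨h1, h2⟩, rfl⟩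
        refine ⟨⟨?_, ?_⟩, w.2.2⟩
        · exact (hXp a w).symm.trans (congrArg Subtype.val h1)
        · exact (hYp b w).symm.trans (congrArg Subtype.val h2)
      · rintro ⟨⟨h1, h2⟩, h3⟩
        refine ⟨⟨v, ⟨ker_pow_mono X ha h1, ker_pow_mono Y hb h2⟩, h3⟩, ⟨?_, ?_⟩, rfl⟩
        · exact Subtype.ext ((hXp a _).trans h1)
        · exact Subtype.ext ((hYp b _).trans h2)
    rw [this]
  have hXtop : XD ^ 2 ^ n = 0 := by
    ext v; rw [hXp]; exact v.2.1.1
  have hYtop : YD ^ 2 ^ n = 0 := by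
    ext v; rw [hYp]; exact v.2.1.2
  have hkX : ∀ a ≤ 2 ^ n, finrank F (LinearMap.ker (XD ^ a)) = a * m := by
    intro a ha
    have := hK a ha _ le_rfl
    rwa [hYtop, LinearMap.ker_zero, inf_top_eq, h.finrank_eq n a m ha hm] at this
  have hkY : ∀ a ≤ 2 ^ n, finrank F (LinearMap.ker (YD ^ a)) = a * m := by
    intro a ha
    have := hK _ le_rfl a ha
    rwa [hXtop, LinearMap.ker_zero, top_inf_eq, ← kerXYN_swap h.comm,
      h.symm.finrank_eq n a m ha hm] at this
  have hdim : finrank F D = 2 ^ n * m := h.finrank_eq n _ m le_rfl hm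
  have key := finrank_ker_inf_ker (XD ^ r) (XD ^ s) (YD ^ r) (YD ^ s) (hc.pow_pow _ _)
    (ker_eq_range XD m _ s r (by omega) hkX hdim) (ker_eq_range YD m _ r s hrs hkY hdim)
  rw [hK r (by omega) r (by omega), hK s (by omega) s (by omega), hkX r (by omega),
    hkY r (by omega), hdim] at key
  omega

/-- `N^(2^n)` vanishes on `ker X^r ⊓ ker Y^r` for `r ≤ 2^n`, so exponents beyond `2^n` give nothing
new. -/
theorem GridPair.stable [CharP F 2] (h : GridPair X Y) (n r m : ℕ) (hr : r ≤ 2 ^ n) :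
    kerXYN X Y r r m = kerXYN X Y r r (min (2 ^ n) m) := by
  rcases le_total m (2 ^ n) with hm | hm
  · rw [min_eq_right hm]
  · rw [min_eq_left hm]
    ext v
    have hz : v ∈ LinearMap.ker (X ^ r) ⊓ LinearMap.ker (Y ^ r) →
        ((X + Y + X * Y) ^ 2 ^ n) v = 0 := fun hv =>
      tensorNil_pow_eq_zero h.comm (ker_pow_mono X hr hv.1) (ker_pow_mono Y hr hv.2)
    constructor
    · rintro ⟨h1, _⟩; exact ⟨h1, hz h1⟩
    · rintro ⟨h1, _⟩; exact ⟨h1, ker_pow_mono _ hm (hz h1)⟩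
end

/-! ### Nilpotent block shifts -/

/-- The subspace of functions `T → F` vanishing outside the set defined by `p`. -/
def suppOn (F : Type*) [Field F] {T : Type*} (p : T → Prop) : Submodule F (T → F) where
  carrier := {f | ∀ x, ¬ p x → f x = 0}
  add_mem' := fun ha hb x hx => by simp [ha x hx, hb x hx]
  zero_mem' := fun x _ => rfl
  smul_mem' := fun c f hf x hx => by simp [hf x hx]

/-- Restriction identifies functions supported on `p` with functions on the subtype. -/
noncomputable def suppOnEquiv (F : Type*) [Field F] {T : Type*} (p : T → Prop) :
    suppOn F p ≃ₗ[F] ({x // p x} → F) := by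
  classical
  exact
  { toFun := fun f x => f.1 x.1
    map_add' := fun _ _ => rfl
    map_smul' := fun _ _ => rfl
    invFun := fun g => ⟨fun x => if h : p x then g ⟨x, h⟩ else 0, fun x hx => by simp [hx]⟩
    left_inv := fun f => by
      ext x
      by_cases h : p x
      · simp [h]
      · simp [h, f.2 x h]
    right_inv := fun g => by
      ext x
      simp [x.2] }

theorem finite_suppOn (F : Type*) [Field F] {T : Type*} (p : T → Prop) [Finite {x // p x}] :
    FiniteDimensional F (suppOn F p) :=
  Module.Finite.equiv (suppOnEquiv F p).symm

theorem finrank_suppOn (F : Type*) [Field F] {T : Type*} (p : T → Prop) [Fintype {x // p x}] :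
    finrank F (suppOn F p) = Fintype.card {x // p x} := by
  rw [(suppOnEquiv F p).finrank_eq, finrank_fintype_fun_eq_card]

/-- The nilpotent part of `jordanBlockDiag F d`: inside each block of length `d i` the coordinates
are shifted down by one, with zero entering at the top. -/
def blockShift (F : Type*) [Field F] {ι : Type} (d : ι → ℕ) : End F (((i : ι) × Fin (d i)) → F) where
  toFun f x := if h : (x.2 : ℕ) + 1 < d x.1 then f ⟨x.1, ⟨x.2 + 1, h⟩⟩ else 0
  map_add' f g := by ext x; by_cases h : (x.2 : ℕ) + 1 < d x.1 <;> simp [h]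
  map_smul' c f := by ext x; by_cases h : (x.2 : ℕ) + 1 < d x.1 <;> simp [h]

theorem blockShift_apply (F : Type*) [Field F] {ι : Type} (d : ι → ℕ)
    (f : ((i : ι) × Fin (d i)) → F) (x : (i : ι) × Fin (d i)) : blockShift F d f x =
    if h : (x.2 : ℕ) + 1 < d x.1 then f ⟨x.1, ⟨x.2 + 1, h⟩⟩ else 0 := rfl

theorem blockShift_pow_apply (F : Type*) [Field F] {ι : Type} (d : ι → ℕ) (m : ℕ)
    (f : ((i : ι) × Fin (d i)) → F) (x : (i : ι) × Fin (d i)) : (blockShift F d ^ m) f x =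
    if h : (x.2 : ℕ) + m < d x.1 then f ⟨x.1, ⟨x.2 + m, h⟩⟩ else 0 := by
  induction m generalizing x with
  | zero => simp
  | succ m ih =>
    rw [pow_succ', Module.End.mul_apply, blockShift_apply]
    by_cases h : (x.2 : ℕ) + 1 < d x.1
    · rw [dif_pos h, ih]
      simp only [add_assoc, add_comm 1 m]
    · rw [dif_neg h, dif_neg (by omega)]

theorem ker_blockShift_pow (F : Type*) [Field F] {ι : Type} (d : ι → ℕ) (m : ℕ) :
    LinearMap.ker (blockShift F d ^ m) = suppOn F (fun x => (x.2 : ℕ) < m) := by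
  ext f
  rw [LinearMap.mem_ker]
  constructor
  · rintro h ⟨i, j⟩ hj
    simp only [not_lt] at hj
    have := congrFun h ⟨i, ⟨j - m, by omega⟩⟩
    rw [blockShift_pow_apply] at this
    simpa [Nat.sub_add_cancel hj] using this
  · intro h
    ext x
    rw [blockShift_pow_apply]
    split_ifs with hx
    · exact h _ (by simp)
    · rfl

theorem finrank_ker_blockShift_pow (F : Type*) [Field F] {ι : Type} [Fintype ι] (d : ι → ℕ) (m : ℕ) :
    finrank F (LinearMap.ker (blockShift F d ^ m)) = ∑ i, min (d i) m := by
  classical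
  rw [ker_blockShift_pow, finrank_suppOn, Fintype.card_subtype,
    Finset.card_filter, Fintype.sum_sigma]
  refine Finset.sum_congr rfl fun i _ => ?_
  rw [← Finset.card_filter, Fin.card_filter_val_lt]

section

open Polynomial DirectSum

/-- The first `k` coefficients of a polynomial in reversed order, so that multiplication by `X`
becomes the superdiagonal shift. -/
noncomputable def truncCoeff (F : Type*) [Field F] (k : ℕ) : F[X] →ₗ[F] (Fin k → F) :=
  LinearMap.pi fun j => Polynomial.lcoeff F (k - 1 - j)

theorem truncCoeff_ker (F : Type*) [Field F] (k : ℕ) :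
    LinearMap.ker (truncCoeff F k) = (F[X] ∙ (X ^ k : F[X])).restrictScalars F := by
  ext p
  rw [LinearMap.mem_ker, Submodule.restrictScalars_mem, Ideal.submodule_span_eq, Ideal.mem_span_singleton, X_pow_dvd_iff]
  constructor
  · intro h j hj
    have := congrFun h ⟨k - 1 - j, by omega⟩
    simp only [truncCoeff, LinearMap.pi_apply, lcoeff_apply, Pi.zero_apply] at this
    rwa [show k - 1 - (k - 1 - j) = j by omega] at this
  · intro h
    ext j
    exact h _ (by omega)

theorem truncCoeff_surj (F : Type*) [Field F] (k : ℕ) :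
    Function.Surjective (truncCoeff F k) := by
  intro f
  refine ⟨∑ j : Fin k, monomial (k - 1 - j) (f j), ?_⟩
  ext i
  simp only [truncCoeff, LinearMap.pi_apply, lcoeff_apply, finsetSum_coeff, coeff_monomial]
  rw [Finset.sum_eq_single i]
  · simp
  · intro j _ hj
    rw [if_neg]
    intro h; apply hj; ext; omega
  · simp

/-- The identification of `F[X] / (X^k)` with `F^k` induced by `truncCoeff`. -/
noncomputable def truncEquiv (F : Type*) [Field F] (k : ℕ) :
    (F[X] ⧸ (F[X] ∙ (X ^ k : F[X]))) ≃ₗ[F] (Fin k → F) :=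
  (Submodule.Quotient.restrictScalarsEquiv F (F[X] ∙ (X ^ k : F[X]))).symm ≪≫ₗ
  (Submodule.quotEquivOfEq _ _ (truncCoeff_ker F k).symm) ≪≫ₗ
  (truncCoeff F k).quotKerEquivOfSurjective (truncCoeff_surj F k)

theorem truncEquiv_X (F : Type*) [Field F] (k : ℕ) (w : F[X] ⧸ (F[X] ∙ (X ^ k : F[X]))) (j : Fin k) :
    truncEquiv F k ((X : F[X]) • w) j =
      if h : (j : ℕ) + 1 < k then truncEquiv F k w ⟨j + 1, h⟩ else 0 := by
  obtain ⟨p, rfl⟩ := Submodule.Quotient.mk_surjective _ w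
  change (X * p : F[X]).coeff (k - 1 - j) = if h : (j : ℕ) + 1 < k then p.coeff (k - 1 - (j + 1)) else 0
  split_ifs with h
  · rw [show k - 1 - j = (k - 1 - (j + 1)) + 1 by omega, coeff_X_mul]
  · rw [show k - 1 - j = 0 by omega, coeff_X_mul_zero]

/-- Jordan normal form of a nilpotent operator, from the structure theorem for finitely generated
torsion modules over `F[X]`. Blocks of size `0` are allowed. -/
theorem exists_blockShift {F V : Type*} [Field F] [AddCommGroup V] [Module F V]
    [FiniteDimensional F V] (N : End F V) (hN : IsNilpotent N) :
    ∃ (b : ℕ) (d : Fin b → ℕ) (e : V ≃ₗ[F] (((i : Fin b) × Fin (d i)) → F)),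
      ∀ v, e (N v) = blockShift F d (e v) := by
  obtain ⟨n, hn⟩ := hN
  have htors : Module.IsTorsion' (AEval' N) (Submonoid.powers (X : F[X])) := by
    intro v
    refine ⟨⟨X ^ n, n, rfl⟩, ?_⟩
    change (X ^ n : F[X]) • v = 0
    obtain ⟨w, rfl⟩ := (AEval'.of N).surjective v
    rw [AEval'.X_pow_smul_of, hn, zero_smul, map_zero]
  obtain ⟨b, d, ⟨E⟩⟩ := Module.torsion_by_prime_power_decomposition
    (Polynomial.irreducible_X (R := F)) htors
  let E1 : (⨁ i : Fin b, F[X] ⧸ (F[X] ∙ (X ^ d i : F[X]))) ≃ₗ[F]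
      ((i : Fin b) → F[X] ⧸ (F[X] ∙ (X ^ d i : F[X]))) := DirectSum.linearEquivFunOnFintype _ _ _
  let e : V ≃ₗ[F] (((i : Fin b) × Fin (d i)) → F) :=
    AEval'.of N ≪≫ₗ E.restrictScalars F ≪≫ₗ E1 ≪≫ₗ
      LinearEquiv.piCongrRight (fun i => truncEquiv F (d i)) ≪≫ₗ
      (LinearEquiv.piCurry F (fun (i : Fin b) (_ : Fin (d i)) => F)).symm
  have he : ∀ v x, e v x = truncEquiv F (d x.1) (E (AEval'.of N v) x.1) x.2 := fun v x => rfl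
  refine ⟨b, d, e, fun v => ?_⟩
  ext x
  rw [blockShift_apply, he, ← AEval'.X_smul_of, map_smul]
  exact truncEquiv_X F (d x.1) _ x.2

end

/-! ### Nilpotent Jordan forms are determined by kernel dimensions -/

theorem sigma_fin_ext {ι : Type} {d : ι → ℕ} {x y : (i : ι) × Fin (d i)} (h1 : x.1 = y.1)
    (h2 : (x.2 : ℕ) = y.2) : x = y := by
  obtain ⟨i, a⟩ := x
  obtain ⟨j, b⟩ := y
  obtain rfl : i = j := h1
  congr 1
  exact Fin.ext h2

/-- The number of entries equal to `s` is minus the second difference at `s` of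
`m ↦ ∑ i, min (d i) m`. -/
theorem card_fiber_eq {ι κ : Type} [Fintype ι] [Fintype κ] (d : ι → ℕ) (d' : κ → ℕ)
    (h : ∀ m, ∑ i, min (d i) m = ∑ j, min (d' j) m) (s : ℕ) (hs : s ≠ 0) :
    Fintype.card {i // d i = s} = Fintype.card {j // d' j = s} := by
  obtain ⟨s, rfl⟩ := Nat.exists_eq_succ_of_ne_zero hs
  have key : ∀ {τ : Type} [Fintype τ] (c : τ → ℕ), Fintype.card {i // c i = s + 1} +
      (∑ i, min (c i) s + ∑ i, min (c i) (s + 2)) = 2 * ∑ i, min (c i) (s + 1) := by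
    intro τ _ c
    rw [Fintype.card_subtype, Finset.card_filter, Finset.mul_sum, ← Finset.sum_add_distrib,
      ← Finset.sum_add_distrib]
    refine Finset.sum_congr rfl fun i _ => ?_
    split_ifs <;> omega
  have h1 := key d
  have h2 := key d'
  rw [h s, h (s + 1), h (s + 2)] at h1
  simp only [Nat.succ_eq_add_one]
  omega

theorem exists_equiv_sizes {ι κ : Type} [Fintype ι] [Fintype κ] (d : ι → ℕ) (d' : κ → ℕ)
    (h : ∀ s ≠ 0, Fintype.card {i // d i = s} = Fintype.card {j // d' j = s}) :
    ∃ τ : {i // d i ≠ 0} ≃ {j // d' j ≠ 0}, ∀ i, d' (τ i).1 = d i.1 := by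
  have φ : ∀ s : ℕ, Nonempty ({i : {i // d i ≠ 0} // d i.1 = s} ≃
      {j : {j // d' j ≠ 0} // d' j.1 = s}) := by
    intro s
    by_cases hs : s = 0
    · have : IsEmpty {i : {i // d i ≠ 0} // d i.1 = s} := ⟨fun i => i.1.2 (i.2.trans hs)⟩
      have : IsEmpty {j : {j // d' j ≠ 0} // d' j.1 = s} := ⟨fun i => i.1.2 (i.2.trans hs)⟩
      exact ⟨Equiv.equivOfIsEmpty _ _⟩
    · exact ⟨(Equiv.subtypeSubtypeEquivSubtype (p := fun i => d i ≠ 0) (q := fun i => d i = s)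
        (fun {x} (hx : d x = s) => hx ▸ hs)).trans
        ((Fintype.equivOfCardEq (h s hs)).trans
        (Equiv.subtypeSubtypeEquivSubtype (p := fun i => d' i ≠ 0) (q := fun i => d' i = s)
        (fun {x} (hx : d' x = s) => hx ▸ hs)).symm)⟩
  replace φ := fun s => (φ s).some
  refine ⟨(Equiv.sigmaFiberEquiv (fun i : {i // d i ≠ 0} => d i.1)).symm.trans
    ((Equiv.sigmaCongrRight φ).trans
      (Equiv.sigmaFiberEquiv (fun j : {j // d' j ≠ 0} => d' j.1))), fun i => ?_⟩
  exact (φ (d i.1) ⟨i, rfl⟩).2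

/-- The dimensions of kernels of powers determine a direct sum of nilpotent Jordan blocks up to
similarity. -/
theorem blockShift_equiv (F : Type*) [Field F] {ι κ : Type} [Fintype ι] [Fintype κ] (d : ι → ℕ)
    (d' : κ → ℕ) (h : ∀ m, ∑ i, min (d i) m = ∑ j, min (d' j) m) :
    ∃ e : (((i : ι) × Fin (d i)) → F) ≃ₗ[F] (((j : κ) × Fin (d' j)) → F),
      ∀ f, e (blockShift F d f) = blockShift F d' (e f) := by
  obtain ⟨τ, hτ⟩ := exists_equiv_sizes d d' (card_fiber_eq d d' h)
  have hτ' : ∀ j, d (τ.symm j).1 = d' j.1 := fun j => by rw [← hτ, τ.apply_symm_apply]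
  let σ : ((j : κ) × Fin (d' j)) ≃ ((i : ι) × Fin (d i)) :=
    { toFun := fun y => ⟨(τ.symm ⟨y.1, y.2.pos.ne'⟩).1, Fin.cast (hτ' ⟨y.1, _⟩).symm y.2⟩
      invFun := fun x => ⟨(τ ⟨x.1, x.2.pos.ne'⟩).1, Fin.cast (hτ ⟨x.1, _⟩).symm x.2⟩
      left_inv := fun y => sigma_fin_ext (by simp) (by simp)
      right_inv := fun x => sigma_fin_ext (by simp) (by simp) }
  have hd : ∀ y, d (σ y).1 = d' y.1 := fun y => hτ' ⟨y.1, y.2.pos.ne'⟩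
  have hv : ∀ y, ((σ y).2 : ℕ) = y.2 := fun y => rfl
  refine ⟨LinearEquiv.funCongrLeft F F σ, fun f => ?_⟩
  ext y
  rw [blockShift_apply, LinearEquiv.funCongrLeft_apply, LinearMap.funLeft_apply,
    LinearEquiv.funCongrLeft_apply, blockShift_apply]
  by_cases hy : (y.2 : ℕ) + 1 < d' y.1
  · rw [dif_pos (by have := hd y; have := hv y; omega), dif_pos hy, LinearMap.funLeft_apply]
    congr 1
  · rw [dif_neg (by have := hd y; have := hv y; omega), dif_neg hy]

/-! ### Matrices as shift operators -/

/-- One row of `J_m` applied to the truncation of a sequence `w`. Since `w` vanishes from `m` on, the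
last row needs no separate formula. -/
theorem sum_jordanBlock {F : Type*} [Field F] (m : ℕ) (i : Fin m) (w : ℕ → F)
    (hw : ∀ j, m ≤ j → w j = 0) : ∑ j : Fin m, jordanBlock F m i j * w j = w i + w (i + 1) := by
  have h : ∀ j : Fin m, jordanBlock F m i j * w j =
      (fun j : ℕ => (if j = (i : ℕ) then w j else 0) + (if j = (i : ℕ) + 1 then w j else 0)) j := by
    intro j
    simp only [jordanBlock, Matrix.of_apply]
    by_cases h1 : (j : ℕ) = i
    · simp [h1]
    · simp [h1]
  rw [Finset.sum_congr rfl fun j _ => h j, Fin.sum_univ_eq_sum_range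
    (fun j : ℕ => (if j = (i : ℕ) then w j else 0) + (if j = (i : ℕ) + 1 then w j else 0)), Finset.sum_add_distrib,
    Finset.sum_ite_eq', Finset.sum_ite_eq', if_pos (by simp)]
  congr 1
  split_ifs with h2
  · rfl
  · exact (hw _ (by simpa using h2)).symm

theorem jordanBlockDiag_mulVec {F : Type*} [Field F] {ι : Type} [Fintype ι] [DecidableEq ι]
    (d : ι → ℕ) (f : ((i : ι) × Fin (d i)) → F) :
    (jordanBlockDiag F d).mulVec f = f + blockShift F d f := by
  ext ⟨i, a⟩
  have h := sum_jordanBlock (d i) a (fun j => if h : j < d i then f ⟨i, ⟨j, h⟩⟩ else 0)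
    (fun j hj => dif_neg (by omega))
  rw [Pi.add_apply, blockShift_apply, Matrix.mulVec, dotProduct, Fintype.sum_sigma,
    Finset.sum_eq_single i]
  · simpa [jordanBlockDiag, Matrix.blockDiagonal'_apply] using h
  · intro j _ hj
    refine Finset.sum_eq_zero fun b _ => ?_
    rw [jordanBlockDiag, Matrix.blockDiagonal'_apply, dif_neg (fun h => hj h.symm), zero_mul]
  · simp

/-- The nilpotent operator `J_r ⊗ J_r - 1`. -/
noncomputable def kronN (F : Type*) [Field F] (r : ℕ) : End F (Fin r × Fin r → F) :=
  (jordanBlock F r ⊗ₖ jordanBlock F r).mulVecLin - 1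

theorem matSimilar_iff {F : Type*} [Field F] (r : ℕ) {ι : Type} [Fintype ι] [DecidableEq ι]
    (d : ι → ℕ) :
    MatSimilar F (jordanBlock F r ⊗ₖ jordanBlock F r) (jordanBlockDiag F d) ↔
    ∃ e : (Fin r × Fin r → F) ≃ₗ[F] (((i : ι) × Fin (d i)) → F),
      ∀ v, e (kronN F r v) = blockShift F d (e v) := by
  refine exists_congr fun e => forall_congr' fun v => ?_
  rw [jordanBlockDiag_mulVec, kronN, LinearMap.sub_apply, map_sub, Matrix.mulVecLin_apply,
    Module.End.one_apply, sub_eq_iff_eq_add']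

/-- The shift `(X f) (i, j) = f (i + 1, j)` on doubly infinite arrays. -/
def gridX (F : Type*) [Field F] : End F (ℕ × ℕ → F) :=
  LinearMap.funLeft F F fun p => (p.1 + 1, p.2)

/-- The shift `(Y f) (i, j) = f (i, j + 1)` on doubly infinite arrays. -/
def gridY (F : Type*) [Field F] : End F (ℕ × ℕ → F) :=
  LinearMap.funLeft F F fun p => (p.1, p.2 + 1)

theorem gridX_pow_apply (F : Type*) [Field F] (a : ℕ) (f : ℕ × ℕ → F) (i j : ℕ) :
    (gridX F ^ a) f (i, j) = f (i + a, j) := by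
  induction a generalizing i with
  | zero => rfl
  | succ a ih =>
    rw [pow_succ', Module.End.mul_apply]
    change (gridX F ^ a) f (i + 1, j) = _
    rw [ih, add_assoc, add_comm 1 a]

theorem gridY_pow_apply (F : Type*) [Field F] (a : ℕ) (f : ℕ × ℕ → F) (i j : ℕ) :
    (gridY F ^ a) f (i, j) = f (i, j + a) := by
  induction a generalizing j with
  | zero => rfl
  | succ a ih =>
    rw [pow_succ', Module.End.mul_apply]
    change (gridY F ^ a) f (i, j + 1) = _
    rw [ih, add_assoc, add_comm 1 a]

theorem grid_ker (F : Type*) [Field F] (a b : ℕ) :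
    LinearMap.ker (gridX F ^ a) ⊓ LinearMap.ker (gridY F ^ b) =
      suppOn F (fun p : ℕ × ℕ => p.1 < a ∧ p.2 < b) := by
  ext f
  constructor
  · rintro ⟨h1, h2⟩ ⟨i, j⟩ hp
    rw [not_and_or, not_lt, not_lt] at hp
    rcases hp with hp | hp
    · have := congrFun (show (gridX F ^ a) f = 0 from h1) (i - a, j)
      rwa [gridX_pow_apply, Nat.sub_add_cancel hp] at this
    · have := congrFun (show (gridY F ^ b) f = 0 from h2) (i, j - b)
      rwa [gridY_pow_apply, Nat.sub_add_cancel hp] at this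
  · intro h
    refine ⟨?_, ?_⟩
    · change (gridX F ^ a) f = 0
      ext ⟨i, j⟩
      rw [gridX_pow_apply]
      exact h _ (by simp)
    · change (gridY F ^ b) f = 0
      ext ⟨i, j⟩
      rw [gridY_pow_apply]
      exact h _ (by simp)

/-- Lattice points of an `a × b` box, as pairs of bounded naturals. -/
def boxEquiv (a b : ℕ) : {p : ℕ × ℕ // p.1 < a ∧ p.2 < b} ≃ Fin a × Fin b where
  toFun p := (⟨p.1.1, p.2.1⟩, ⟨p.1.2, p.2.2⟩)
  invFun p := ⟨(p.1, p.2), p.1.2, p.2.2⟩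
  left_inv _ := rfl
  right_inv _ := rfl

theorem gridPair (F : Type*) [Field F] : GridPair (gridX F) (gridY F) where
  comm := rfl
  fin a b := by
    rw [grid_ker]
    have := Finite.of_equiv _ (boxEquiv a b).symm
    exact finite_suppOn F _
  dim a b := by
    rw [grid_ker]
    have := Fintype.ofEquiv _ (boxEquiv a b).symm
    rw [finrank_suppOn, Fintype.card_congr (boxEquiv a b)]
    simp

/-- Extension by zero of an `r × r` array to a doubly infinite one. -/
def gridIncl (F : Type*) [Field F] (r : ℕ) : (Fin r × Fin r → F) →ₗ[F] (ℕ × ℕ → F) where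
  toFun v p := if h : p.1 < r ∧ p.2 < r then v (⟨p.1, h.1⟩, ⟨p.2, h.2⟩) else 0
  map_add' f g := by ext x; by_cases h : x.1 < r ∧ x.2 < r <;> simp [h]
  map_smul' c f := by ext x; by_cases h : x.1 < r ∧ x.2 < r <;> simp [h]

theorem gridIncl_apply (F : Type*) [Field F] (r : ℕ) (v : Fin r × Fin r → F) (p : ℕ × ℕ) :
    gridIncl F r v p = if h : p.1 < r ∧ p.2 < r then v (⟨p.1, h.1⟩, ⟨p.2, h.2⟩) else 0 := rfl

theorem gridIncl_val (F : Type*) [Field F] (r : ℕ) (v : Fin r × Fin r → F) (i j : Fin r) :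
    gridIncl F r v (i, j) = v (i, j) := by
  rw [gridIncl_apply, dif_pos ⟨i.2, j.2⟩]

theorem gridIncl_zero (F : Type*) [Field F] (r : ℕ) (v : Fin r × Fin r → F) (i j : ℕ)
    (h : r ≤ i ∨ r ≤ j) : gridIncl F r v (i, j) = 0 := by
  rw [gridIncl_apply, dif_neg]
  simp only
  omega

theorem gridIncl_injective (F : Type*) [Field F] (r : ℕ) : Function.Injective (gridIncl F r) := by
  intro v w h
  ext ⟨i, j⟩
  rw [← gridIncl_val F r v, h, gridIncl_val]

theorem gridIncl_range (F : Type*) [Field F] (r : ℕ) :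
    LinearMap.range (gridIncl F r) =
      LinearMap.ker (gridX F ^ r) ⊓ LinearMap.ker (gridY F ^ r) := by
  rw [grid_ker]
  ext f
  constructor
  · rintro ⟨v, rfl⟩ p hp
    exact dif_neg hp
  · intro hf
    refine ⟨fun p => f (p.1, p.2), ?_⟩
    ext p
    rw [gridIncl_apply]
    split_ifs with h
    · rfl
    · exact (hf p h).symm

/-- Extension by zero intertwines `J_r ⊗ J_r - 1` with `(1 + X)(1 + Y) - 1`. -/
theorem gridIncl_kronN (F : Type*) [Field F] (r : ℕ) (v : Fin r × Fin r → F) :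
    gridIncl F r (kronN F r v) =
      (gridX F + gridY F + gridX F * gridY F) (gridIncl F r v) := by
  set w := gridIncl F r v with hw
  have hz : ∀ i j : ℕ, r ≤ i ∨ r ≤ j → w (i, j) = 0 := gridIncl_zero F r v
  ext ⟨i, j⟩
  have hR : (gridX F + gridY F + gridX F * gridY F) w (i, j) =
      w (i + 1, j) + w (i, j + 1) + w (i + 1, j + 1) := rfl
  rw [hR]
  by_cases h : i < r ∧ j < r
  · have h1 := gridIncl_val F r (kronN F r v) ⟨i, h.1⟩ ⟨j, h.2⟩
    simp only at h1
    rw [h1, kronN, LinearMap.sub_apply, Pi.sub_apply, Matrix.mulVecLin_apply, Matrix.mulVec,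
      dotProduct, Fintype.sum_prod_type, Module.End.one_apply]
    have h2 : ∀ x : Fin r, ∑ y : Fin r, (jordanBlock F r ⊗ₖ jordanBlock F r)
        (⟨i, h.1⟩, ⟨j, h.2⟩) (x, y) * v (x, y) =
        jordanBlock F r ⟨i, h.1⟩ x * (fun a : ℕ => w (a, j) + w (a, j + 1)) x := by
      intro x
      have := sum_jordanBlock r ⟨j, h.2⟩ (fun b => w (x, b)) (fun b hb => hz _ _ (Or.inr hb))
      simp only at this ⊢
      rw [← this, Finset.mul_sum]
      refine Finset.sum_congr rfl fun y _ => ?_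
      rw [Matrix.kroneckerMap_apply, hw, gridIncl_val, mul_assoc]
    rw [Finset.sum_congr rfl fun x _ => h2 x, sum_jordanBlock r ⟨i, h.1⟩
      (fun a : ℕ => w (a, j) + w (a, j + 1))
      (fun a ha => by rw [hz _ _ (Or.inl ha), hz _ _ (Or.inl ha), add_zero])]
    have h3 : v (⟨i, h.1⟩, ⟨j, h.2⟩) = w (i, j) := (gridIncl_val F r v ⟨i, h.1⟩ ⟨j, h.2⟩).symm
    rw [h3]
    ring
  · have h' : r ≤ i ∨ r ≤ j := by omega
    rw [gridIncl_zero _ _ _ _ _ h', hz _ _ (by omega), hz _ _ (by omega), hz _ _ (by omega)]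
    simp

theorem gridIncl_kronN_pow (F : Type*) [Field F] (r m : ℕ) (v : Fin r × Fin r → F) :
    gridIncl F r ((kronN F r ^ m) v) =
      ((gridX F + gridY F + gridX F * gridY F) ^ m) (gridIncl F r v) := by
  induction m with
  | zero => rfl
  | succ m ih =>
    rw [pow_succ', pow_succ', Module.End.mul_apply, Module.End.mul_apply, gridIncl_kronN, ih]

theorem finrank_ker_kronN (F : Type*) [Field F] (r m : ℕ) :
    finrank F (LinearMap.ker (kronN F r ^ m)) = finrank F (kerXYN (gridX F) (gridY F) r r m) := by
  have h : (LinearMap.ker (kronN F r ^ m)).map (gridIncl F r) =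
      kerXYN (gridX F) (gridY F) r r m := by
    rw [kerXYN, ← gridIncl_range]
    ext f
    constructor
    · rintro ⟨v, hv, rfl⟩
      refine ⟨⟨v, rfl⟩, ?_⟩
      change _ = _
      rw [← gridIncl_kronN_pow, show (kronN F r ^ m) v = 0 from hv, map_zero]
    · rintro ⟨⟨v, rfl⟩, hv⟩
      refine ⟨v, ?_, rfl⟩
      apply gridIncl_injective F r
      rw [gridIncl_kronN_pow, map_zero]
      exact hv
  rw [← h, ← (Submodule.equivMapOfInjective (gridIncl F r) (gridIncl_injective F r) _).finrank_eq]

theorem kronN_nilpotent (F : Type*) [Field F] [CharP F 2] (r : ℕ) : IsNilpotent (kronN F r) := by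
  refine ⟨2 ^ r, ?_⟩
  refine LinearMap.ext fun v => ?_
  apply gridIncl_injective F r
  have hv : gridIncl F r v ∈ LinearMap.ker (gridX F ^ r) ⊓ LinearMap.ker (gridY F ^ r) := by
    rw [← gridIncl_range]; exact ⟨v, rfl⟩
  have hr : r ≤ 2 ^ r := Nat.lt_two_pow_self.le
  rw [gridIncl_kronN_pow, LinearMap.zero_apply, map_zero]
  exact tensorNil_pow_eq_zero (gridPair F).comm (ker_pow_mono _ hr hv.1) (ker_pow_mono _ hr hv.2)

/-! ### Arithmetic of the expansion -/

theorem coPartial_of_le (k : ℕ) (e : Fin k → ℕ) (j : ℕ) (h : k ≤ j) : coPartial k e j = 0 := by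
  rw [coPartial, Finset.filter_false_of_mem, Finset.sum_empty]
  intro i _
  omega

theorem filter_le_eq_insert (k j : ℕ) (h : j < k) :
    Finset.univ.filter (fun i : Fin k => j ≤ (i : ℕ)) =
      insert ⟨j, h⟩ (Finset.univ.filter (fun i : Fin k => j + 1 ≤ (i : ℕ))) := by
  ext i
  simp only [Finset.mem_filter, Finset.mem_univ, true_and, Finset.mem_insert, Fin.ext_iff]
  omega

theorem coPartial_succ (k : ℕ) (e : Fin k → ℕ) (j : ℕ) (h : j < k) :
    coPartial k e j = 2 ^ e ⟨j, h⟩ - coPartial k e (j + 1) := by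
  unfold coPartial
  rw [filter_le_eq_insert k j h, Finset.sum_insert (by simp), sub_eq_add_neg,
    ← Finset.sum_neg_distrib]
  simp only [Nat.sub_self, pow_zero, one_mul]
  congr 1
  refine Finset.sum_congr rfl fun i hi => ?_
  have hi : j + 1 ≤ (i : ℕ) := by simpa using hi
  rw [show (i : ℕ) - j = (i - (j + 1)) + 1 by omega, pow_succ]
  ring

/-- The partial sums of an alternating sum of strictly decreasing powers of two satisfy
`0 ≤ r_j ≤ 2^(e_j)` and `2 r_(j+1) ≤ 2^(e_j)`, with `e` indexed from `0`. -/
theorem coPartial_bounds (k : ℕ) (e : Fin k → ℕ) (he : StrictAnti e) (j : ℕ) (hj : j ≤ k) :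
    0 ≤ coPartial k e j ∧ ∀ h : j < k, coPartial k e j ≤ 2 ^ e ⟨j, h⟩ ∧
      2 * coPartial k e (j + 1) ≤ 2 ^ e ⟨j, h⟩ := by
  induction hj using Nat.decreasingInduction with
  | self => exact ⟨(coPartial_of_le k e k le_rfl).ge, fun h => absurd h (lt_irrefl _)⟩
  | of_succ j hj ih =>
    have h2 : 2 * coPartial k e (j + 1) ≤ 2 ^ e ⟨j, hj⟩ := by
      by_cases h : j + 1 < k
      · have h3 := (ih.2 h).1
        have h4 : e ⟨j + 1, h⟩ + 1 ≤ e ⟨j, hj⟩ := he (by simp [Fin.lt_def])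
        have h5 : (2 : ℤ) ^ (e ⟨j + 1, h⟩ + 1) ≤ 2 ^ e ⟨j, hj⟩ :=
          pow_le_pow_right₀ (by norm_num) h4
        rw [pow_succ] at h5
        linarith
      · rw [coPartial_of_le k e _ (by omega)]
        positivity
    rw [coPartial_succ k e j hj]
    exact ⟨by linarith [ih.1], fun _ => ⟨by linarith [ih.1], h2⟩⟩

/-- Iterating the reflection `r_j = 2^(e_j) - r_(j+1)` (with `e` indexed from `0`) down to `r_k = 0`
computes the kernel dimensions of all powers of `N`. -/
theorem finrank_kerXYN_eq (F : Type*) [Field F] [CharP F 2] (k : ℕ) (e : Fin k → ℕ)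
    (he : StrictAnti e) (j : ℕ) (hj : j ≤ k) (m : ℕ) :
    (finrank F (kerXYN (gridX F) (gridY F) (coPartial k e j).toNat (coPartial k e j).toNat m) : ℤ) =
      ∑ i ∈ Finset.univ.filter (fun i : Fin k => j ≤ (i : ℕ)),
        (2 ^ e i - 2 * coPartial k e ((i : ℕ) + 1)) * (min (2 ^ e i) m : ℕ) := by
  induction hj using Nat.decreasingInduction generalizing m with
  | self =>
    rw [coPartial_of_le k e k le_rfl, Finset.filter_false_of_mem (fun i _ => by omega)]
    have : kerXYN (gridX F) (gridY F) (0 : ℤ).toNat (0 : ℤ).toNat m = ⊥ := by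
      rw [eq_bot_iff]; intro v hv; simpa using hv.1.1
    rw [this]; simp
  | of_succ j hj ih =>
    set n := e ⟨j, hj⟩ with hn
    have b1 := coPartial_bounds k e he j hj.le
    have b2 := coPartial_bounds k e he (j + 1) hj
    have hs := coPartial_succ k e j hj
    obtain ⟨r, hr⟩ := Int.eq_ofNat_of_zero_le b1.1
    obtain ⟨s, hs'⟩ := Int.eq_ofNat_of_zero_le b2.1
    have hrs : r + s = 2 ^ n := by
      rw [hr, hs', ← hn] at hs
      zify; linarith
    have ih' := ih (min (2 ^ n) m)
    have hsum : ∑ i ∈ Finset.univ.filter (fun i : Fin k => j + 1 ≤ (i : ℕ)),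
        (2 ^ e i - 2 * coPartial k e ((i : ℕ) + 1)) * ((min (2 ^ e i) (min (2 ^ n) m) : ℕ) : ℤ) =
        ∑ i ∈ Finset.univ.filter (fun i : Fin k => j + 1 ≤ (i : ℕ)),
        (2 ^ e i - 2 * coPartial k e ((i : ℕ) + 1)) * ((min (2 ^ e i) m : ℕ) : ℤ) := by
      refine Finset.sum_congr rfl fun i hi => ?_
      have hi : j + 1 ≤ (i : ℕ) := by simpa using hi
      have h4 : e i ≤ n := he.antitone (by rw [Fin.le_def]; simp only; omega)
      have h5 : 2 ^ e i ≤ 2 ^ n := Nat.pow_le_pow_right (by norm_num) h4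
      rw [← min_assoc, min_eq_left h5]
    have hrefl := (gridPair F).reflect n r s (min (2 ^ n) m) hrs (min_le_left _ _)
    rw [hsum, hs', Int.toNat_natCast] at ih'
    rw [filter_le_eq_insert k j hj, Finset.sum_insert (by simp), ← ih', hr, Int.toNat_natCast,
      (gridPair F).stable n r m (by omega)]
    simp only [← hn, hs']
    generalize min (2 ^ n) m = m' at hrefl ⊢
    zify at hrefl hrs
    linear_combination hrefl + 2 * (m' : ℤ) * hrs

/-! ### The decomposition -/

theorem finrank_ker_of_equiv {F V W : Type*} [Field F] [AddCommGroup V] [Module F V]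
    [AddCommGroup W] [Module F W] (A : End F V) (B : End F W) (e : V ≃ₗ[F] W)
    (h : ∀ v, e (A v) = B (e v)) (m : ℕ) :
    finrank F (LinearMap.ker (A ^ m)) = finrank F (LinearMap.ker (B ^ m)) := by
  have hp : ∀ v, e ((A ^ m) v) = (B ^ m) (e v) := by
    intro v
    induction m with
    | zero => rfl
    | succ m ih => rw [pow_succ', pow_succ', Module.End.mul_apply, Module.End.mul_apply, h, ih]
  have hm : (LinearMap.ker (A ^ m)).map (e : V →ₗ[F] W) = LinearMap.ker (B ^ m) := by
    ext w
    constructor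
    · rintro ⟨v, hv, rfl⟩
      change (B ^ m) (e v) = 0
      rw [← hp, show (A ^ m) v = 0 from hv, map_zero]
    · intro hw
      refine ⟨e.symm w, ?_, by simp⟩
      apply e.injective
      rw [hp, e.apply_symm_apply, map_zero]
      exact hw
  rw [← hm, LinearEquiv.finrank_map_eq]

/-- In characteristic 2, if `r = Σ (−1)^{i−1} 2^{e_i}` is the consecutive-ones binary
expansion of `r`, then `J_r ⊗ J_r` decomposes into `2^{e_i} − 2 r_i` blocks `J_{2^{e_i}}`
for each `i`; in particular every block size in the Jordan form of `J_r ⊗ J_r` is a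
power of 2. -/
theorem stmt_18 {F : Type*} [Field F] [CharP F 2]
    (r : ℕ) (hr : 0 < r)
    (k : ℕ) (e : Fin k → ℕ) (he : StrictAnti e)
    (hgap : ∀ hk : 2 ≤ k, e ⟨k - 1, by omega⟩ + 1 < e ⟨k - 2, by omega⟩)
    (hexp : (r : ℤ) = coPartial k e 0) :
    (∀ i : Fin k, 0 ≤ 2 ^ (e i) - 2 * coPartial k e ((i : ℕ) + 1)) ∧
    MatSimilar F (jordanBlock F r ⊗ₖ jordanBlock F r)
      (jordanBlockDiag F
        (fun x : (i : Fin k) ×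
            Fin ((2 ^ (e i) - 2 * coPartial k e ((i : ℕ) + 1)).toNat) =>
          2 ^ (e x.1))) ∧
    (∀ (b : ℕ) (lam : Fin b → ℕ), Antitone lam → (∀ i, 0 < lam i) →
      MatSimilar F (jordanBlock F r ⊗ₖ jordanBlock F r) (jordanBlockDiag F lam) →
      ∀ i, ∃ m : ℕ, lam i = 2 ^ m) := by
  have hnn : ∀ i : Fin k, 0 ≤ 2 ^ (e i) - 2 * coPartial k e ((i : ℕ) + 1) := fun i =>
    sub_nonneg.2 ((coPartial_bounds k e he i i.2.le).2 i.2).2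
  set d : ((i : Fin k) × Fin ((2 ^ (e i) - 2 * coPartial k e ((i : ℕ) + 1)).toNat)) → ℕ :=
    fun x => 2 ^ (e x.1) with hd
  have hker : ∀ m, finrank F (LinearMap.ker (kronN F r ^ m)) = ∑ x, min (d x) m := by
    intro m
    have h := finrank_kerXYN_eq F k e he 0 (Nat.zero_le _) m
    rw [← hexp, Int.toNat_natCast, ← finrank_ker_kronN, Finset.filter_true_of_mem (by simp)] at h
    zify
    rw [h, Fintype.sum_sigma]
    refine Finset.sum_congr rfl fun i _ => ?_
    simp only [hd, Finset.sum_const, Finset.card_univ, Fintype.card_fin, nsmul_eq_mul]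
    push_cast
    rw [Int.toNat_of_nonneg (hnn i)]
  have hkerlam : ∀ {ι : Type} [Fintype ι] (lam : ι → ℕ)
      (E : (Fin r × Fin r → F) ≃ₗ[F] (((i : ι) × Fin (lam i)) → F)),
      (∀ v, E (kronN F r v) = blockShift F lam (E v)) →
      ∀ m, ∑ i, min (lam i) m = ∑ x, min (d x) m := by
    intro ι _ lam E hE m
    rw [← hker, finrank_ker_of_equiv _ _ E hE, finrank_ker_blockShift_pow]
  refine ⟨hnn, ?_, ?_⟩
  · obtain ⟨b, lam, E, hE⟩ := exists_blockShift (kronN F r) (kronN_nilpotent F r)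
    obtain ⟨E', hE'⟩ := blockShift_equiv F lam d (hkerlam lam E hE)
    exact (matSimilar_iff r d).2 ⟨E.trans E', fun v => by
      rw [LinearEquiv.trans_apply, hE, hE', LinearEquiv.trans_apply]⟩
  · intro b lam _ hpos hsim i
    obtain ⟨E, hE⟩ := (matSimilar_iff r lam).1 hsim
    have hc := card_fiber_eq lam d (hkerlam lam E hE) (lam i) (hpos i).ne'
    have : 0 < Fintype.card {x // d x = lam i} := by
      rw [← hc]; exact Fintype.card_pos_iff.2 ⟨⟨i, rfl⟩⟩
    obtain ⟨x, hx⟩ := Fintype.card_pos_iff.1 this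
    exact ⟨e x.1, hx.symm⟩
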